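/- Let m be a positive integer and let Φ(m) = {k : 1 ≤ k ≤ m, gcd(k,m) = 1}. For all integers n ≥ m, n·ρ(n,m) = (n−m)·ρ(n−m,m) + Σ_{k ∈ Φ(m)} ρ(n−k,m). -/

import Mathlib

/-- `rho n m` is the proportion of permutations in `Sym(n)` whose order is coprime to `m`.
Note that `rho 0 m = 1`. -/
noncomputable def rho (n m : ℕ) : ℝ :=
  (Finset.univ.filter (fun π : Equiv.Perm (Fin n) => Nat.Coprime (orderOf π) m)).card /
    (Nat.factorial n : ℝ)

/-!
Give each permutation of `n` points the weight `∏ w k`, the product running over the lengths `k` of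
its cycles, and let `Zₙ(w)` be the average weight. Grouping permutations by conjugacy class gives
`Zₙ(w) = ∑ (∏_{k ∈ s} w k) / z(s)` over the partitions `s` of `n`, where `z(s)` is the order of a
centralizer. Removing one part `k` from `s` divides `z(s)` by `k` times the multiplicity of `k`, and
these numbers add up to `n` over the distinct parts `k`; hence `n Zₙ(w) = ∑_{k=1}^n w k Zₙ₋ₖ(w)`.
If `w` has period `m`, then the terms with `k > m` form the same sum for `n - m`. Finally, `ρ(n,m)`
is `Zₙ(w)` for the indicator function `w` of the integers coprime to `m`, as the order of a
permutation is the least common multiple of its cycle lengths.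
-/

open Finset Equiv
open scoped Nat

/-- The number `z(s) = ∏ᵢ i ^ mᵢ * mᵢ!`, with `mᵢ` the multiplicity of `i` in `s`: the order of the
centralizer of a permutation with multiset of cycle lengths `s`, fixed points included as ones. -/
def centralizerOrder (s : Multiset ℕ) : ℕ :=
  s.prod * ∏ i ∈ s.toFinset, (s.count i)!

theorem prod_count_factorial_of_subset {α : Type*} [DecidableEq α] {s : Multiset α} {T : Finset α}
    (hT : s.toFinset ⊆ T) : ∏ i ∈ s.toFinset, (s.count i)! = ∏ i ∈ T, (s.count i)! :=
  prod_subset hT fun i _ hi => by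
    rw [Multiset.count_eq_zero_of_notMem (mt Multiset.mem_toFinset.mpr hi), Nat.factorial_zero]

theorem prod_count_factorial_cons {α : Type*} [DecidableEq α] (a : α) (s : Multiset α) :
    ∏ i ∈ (a ::ₘ s).toFinset, ((a ::ₘ s).count i)! =
      (s.count a + 1) * ∏ i ∈ s.toFinset, (s.count i)! := by
  have hoff : ∏ i ∈ (insert a s.toFinset).erase a, ((a ::ₘ s).count i)! =
      ∏ i ∈ (insert a s.toFinset).erase a, (s.count i)! :=
    prod_congr rfl fun i hi => by rw [Multiset.count_cons_of_ne (ne_of_mem_erase hi)]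
  have ha : a ∈ insert a s.toFinset := mem_insert_self a s.toFinset
  rw [prod_count_factorial_of_subset (subset_insert a s.toFinset), Multiset.toFinset_cons,
    ← mul_prod_erase _ _ ha, ← mul_prod_erase _ _ ha, hoff, Multiset.count_cons_self,
    Nat.factorial_succ, mul_assoc]

theorem centralizerOrder_cons (k : ℕ) (s : Multiset ℕ) :
    centralizerOrder (k ::ₘ s) = k * (s.count k + 1) * centralizerOrder s := by
  rw [centralizerOrder, centralizerOrder, Multiset.prod_cons, prod_count_factorial_cons]
  ring

theorem centralizerOrder_eq_mul_erase {k : ℕ} {s : Multiset ℕ} (hk : k ∈ s) :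
    centralizerOrder s = k * s.count k * centralizerOrder (s.erase k) := by
  conv_lhs => rw [← Multiset.cons_erase hk, centralizerOrder_cons, Multiset.count_erase_self,
    Nat.sub_add_cancel (Multiset.count_pos.mpr hk)]

theorem centralizerOrder_add_replicate_one {s : Multiset ℕ} (hs : 1 ∉ s) (j : ℕ) :
    centralizerOrder (s + Multiset.replicate j 1) = j ! * centralizerOrder s := by
  induction j with
  | zero => simp
  | succ j ih =>
    rw [Multiset.replicate_succ, Multiset.add_cons, centralizerOrder_cons, ih, Multiset.count_add,
      Multiset.count_eq_zero_of_notMem hs, Multiset.count_replicate_self, Nat.factorial_succ]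
    ring

section PermPartition

variable {α : Type*} [Fintype α] [DecidableEq α]

theorem nat_card_centralizer_eq_centralizerOrder (g : Perm α) :
    Nat.card (Subgroup.centralizer {g}) = centralizerOrder g.partition.parts := by
  have h1 : 1 ∉ g.cycleType := fun h => (Perm.one_lt_of_mem_cycleType h).ne rfl
  rw [Perm.nat_card_centralizer, Perm.parts_partition, centralizerOrder_add_replicate_one h1,
    Perm.sum_cycleType, centralizerOrder, mul_assoc]

theorem parts_eq_filter_two_le_add_replicate_one {n : ℕ} (p : n.Partition) :
    p.parts = p.parts.filter (2 ≤ ·) +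
      Multiset.replicate (n - (p.parts.filter (2 ≤ ·)).sum) 1 := by
  obtain ⟨j, hj⟩ : ∃ j, p.parts.filter (¬ 2 ≤ ·) = Multiset.replicate j 1 := by
    refine ⟨_, Multiset.eq_replicate_card.mpr fun k hk => ?_⟩
    have hpos := p.parts_pos (Multiset.mem_of_mem_filter hk)
    have hlt := Multiset.of_mem_filter hk
    omega
  have hsplit := Multiset.filter_add_not (2 ≤ ·) p.parts
  rw [hj] at hsplit
  have hsum : (p.parts.filter (2 ≤ ·)).sum + j = n := by
    simpa [p.parts_sum] using congrArg Multiset.sum hsplit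
  rw [← Nat.eq_sub_of_add_eq' hsum, hsplit]

theorem exists_perm_partition_eq (p : (Fintype.card α).Partition) :
    ∃ g : Perm α, g.partition = p := by
  have hp := parts_eq_filter_two_le_add_replicate_one p
  have hsum := congrArg Multiset.sum hp
  rw [Multiset.sum_add, p.parts_sum] at hsum
  have hle : (p.parts.filter (2 ≤ ·)).sum ≤ Fintype.card α :=
    (Nat.le_add_right _ _).trans_eq hsum.symm
  obtain ⟨g, hg⟩ := (Perm.exists_with_cycleType_iff α).mpr
    ⟨hle, fun k hk => Multiset.of_mem_filter hk⟩
  refine ⟨g, Nat.Partition.ext ?_⟩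
  rw [Perm.parts_partition, ← Perm.sum_cycleType, hg, ← hp]

theorem card_perm_partition_eq_mul_centralizerOrder (p : (Fintype.card α).Partition) :
    #{g : Perm α | g.partition = p} * centralizerOrder p.parts = (Fintype.card α)! := by
  obtain ⟨g, rfl⟩ := exists_perm_partition_eq p
  rw [← nat_card_centralizer_eq_centralizerOrder, Perm.nat_card_centralizer,
    ← Perm.card_isConj_mul_eq g]
  simp only [Perm.partition_eq_of_isConj, Set.coe_ofPred, Nat.card_eq_fintype_card,
    Fintype.card_subtype, eq_comm (a := g.partition)]

theorem sum_perm_partition_div_factorial {K : Type*} [Field K] [CharZero K]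
    (f : (Fintype.card α).Partition → K) :
    (∑ g : Perm α, f g.partition) / ((Fintype.card α)! : K) =
      ∑ p, f p / (centralizerOrder p.parts : K) := by
  rw [← sum_fiberwise univ (fun g : Perm α => g.partition), sum_div]
  refine sum_congr rfl fun p _ => ?_
  have hcard := card_perm_partition_eq_mul_centralizerOrder p
  have hne : #{g : Perm α | g.partition = p} ≠ 0 :=
    left_ne_zero_of_mul (hcard ▸ Nat.factorial_ne_zero _)
  have hconst : ∑ g : Perm α with g.partition = p, f g.partition =
      #{g : Perm α | g.partition = p} * f p := by
    rw [sum_congr rfl fun g hg => congrArg f (mem_filter.mp hg).2, sum_const, nsmul_eq_mul]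
  rw [hconst, ← hcard, Nat.cast_mul, mul_div_mul_left _ _ (Nat.cast_ne_zero.mpr hne)]

end PermPartition

section CycleIndex

variable {K : Type*} [Field K]

/-- The cycle index of `Sym(n)` evaluated at `w`: the average over all permutations of `n` points of
the product of `w k` over their cycle lengths `k`, where a fixed point is a cycle of length one. -/
noncomputable def cycleIndex (w : ℕ → K) (n : ℕ) : K :=
  (∑ g : Perm (Fin n), (g.partition.parts.map w).prod) / (n ! : K)

theorem cycleIndex_eq_sum_partition [CharZero K] (w : ℕ → K) (n : ℕ) :
    cycleIndex w n = ∑ p : n.Partition, (p.parts.map w).prod / (centralizerOrder p.parts : K) := by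
  calc cycleIndex w n
      = (∑ g : Perm (Fin n), (g.partition.parts.map w).prod) / ((Fintype.card (Fin n))! : K) := by
        simp only [cycleIndex, Fintype.card_fin]
    _ = ∑ p : (Fintype.card (Fin n)).Partition,
          (p.parts.map w).prod / (centralizerOrder p.parts : K) :=
        sum_perm_partition_div_factorial fun p => (p.parts.map w).prod
    _ = ∑ p : n.Partition, (p.parts.map w).prod / (centralizerOrder p.parts : K) := by
        rw [Fintype.card_fin]

theorem sum_Icc_mul_count_parts {n : ℕ} (p : n.Partition) :
    ∑ k ∈ Icc 1 n, k * p.parts.count k = n := by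
  have hsub : p.parts.toFinset ⊆ Icc 1 n := fun k hk =>
    have hk' := Multiset.mem_toFinset.mp hk
    mem_Icc.mpr ⟨p.parts_pos hk', Nat.Partition.le_of_mem_parts hk'⟩
  conv_rhs => rw [← p.parts_sum, sum_multiset_count_of_subset _ _ hsub]
  simp only [smul_eq_mul, mul_comm]

theorem mul_count_mul_prod_map_div_centralizerOrder [CharZero K] (w : ℕ → K) {k : ℕ} (hk : k ≠ 0)
    {s : Multiset ℕ} (hks : k ∈ s) :
    ((k * s.count k : ℕ) : K) * ((s.map w).prod / (centralizerOrder s : K)) =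
      w k * (((s.erase k).map w).prod / (centralizerOrder (s.erase k) : K)) := by
  have hne : ((k * s.count k : ℕ) : K) ≠ 0 :=
    Nat.cast_ne_zero.mpr (mul_ne_zero hk (Multiset.count_pos.mpr hks).ne')
  rw [centralizerOrder_eq_mul_erase hks, Nat.cast_mul (k * s.count k), ← mul_div_assoc,
    mul_div_mul_left _ _ hne, ← Multiset.prod_map_erase hks, mul_div_assoc]

theorem sum_partition_mul_count [CharZero K] (w : ℕ → K) {k n : ℕ} (hk : 1 ≤ k) (hkn : k ≤ n) :
    ∑ p : n.Partition, ((k * p.parts.count k : ℕ) : K) *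
        ((p.parts.map w).prod / (centralizerOrder p.parts : K)) =
      w k * cycleIndex w (n - k) := by
  rw [cycleIndex_eq_sum_partition, mul_sum]
  let e := (Nat.Partition.partitionWithPartEquiv hk hkn).symm
  refine (Fintype.sum_of_injective (fun q => (e q).1) (Subtype.val_injective.comp e.injective)
    _ _ (fun p hp => ?_) fun q => ?_).symm
  · have hkp : k ∉ p.parts := fun h => hp ⟨e.symm ⟨p, h⟩, by simp⟩
    rw [Multiset.count_eq_zero_of_notMem hkp, mul_zero, Nat.cast_zero, zero_mul]
  · rw [mul_count_mul_prod_map_div_centralizerOrder w (by omega) (e q).2,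
      Nat.Partition.partitionWithPartEquiv_symm_apply_parts, Multiset.erase_cons_head]

theorem mul_cycleIndex [CharZero K] (w : ℕ → K) (n : ℕ) :
    (n : K) * cycleIndex w n = ∑ k ∈ Icc 1 n, w k * cycleIndex w (n - k) := by
  set t : n.Partition → K := fun p => (p.parts.map w).prod / (centralizerOrder p.parts : K)
  calc (n : K) * cycleIndex w n
      = ∑ p : n.Partition, (n : K) * t p := by rw [cycleIndex_eq_sum_partition, mul_sum]
    _ = ∑ p : n.Partition, ∑ k ∈ Icc 1 n, ((k * p.parts.count k : ℕ) : K) * t p := by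
      refine sum_congr rfl fun p _ => ?_
      rw [← sum_mul, ← Nat.cast_sum, sum_Icc_mul_count_parts]
    _ = ∑ k ∈ Icc 1 n, ∑ p : n.Partition, ((k * p.parts.count k : ℕ) : K) * t p := sum_comm
    _ = ∑ k ∈ Icc 1 n, w k * cycleIndex w (n - k) := sum_congr rfl fun k hk =>
      sum_partition_mul_count w (mem_Icc.mp hk).1 (mem_Icc.mp hk).2

theorem sum_Icc_one_add {M : Type*} [AddCommMonoid M] (f : ℕ → M) (m l : ℕ) :
    ∑ k ∈ Icc 1 (m + l), f k = ∑ k ∈ Icc 1 m, f k + ∑ k ∈ Icc 1 l, f (k + m) := by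
  induction l with
  | zero => simp
  | succ l ih =>
    rw [← add_assoc, sum_Icc_succ_top (by omega), sum_Icc_succ_top (by omega), ih, add_assoc,
      add_right_comm l, add_comm l]

theorem mul_cycleIndex_of_periodic [CharZero K] {w : ℕ → K} {m n : ℕ} (hw : w.Periodic m)
    (hmn : m ≤ n) :
    (n : K) * cycleIndex w n = ((n - m : ℕ) : K) * cycleIndex w (n - m) +
      ∑ k ∈ Icc 1 m, w k * cycleIndex w (n - k) := by
  obtain ⟨l, rfl⟩ := Nat.exists_eq_add_of_le hmn
  rw [mul_cycleIndex, mul_cycleIndex, sum_Icc_one_add, add_comm, Nat.add_sub_cancel_left]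
  congr 1
  refine sum_congr rfl fun k _ => ?_
  rw [hw k, add_comm k m, Nat.add_sub_add_left]

end CycleIndex

theorem coprime_lcm_left_iff {a b m : ℕ} :
    Nat.Coprime (lcm a b) m ↔ Nat.Coprime a m ∧ Nat.Coprime b m :=
  ⟨fun h => ⟨h.coprime_dvd_left (dvd_lcm_left a b), h.coprime_dvd_left (dvd_lcm_right a b)⟩,
    fun h => (h.1.mul_left h.2).coprime_dvd_left (Nat.lcm_dvd_mul a b)⟩

theorem coprime_multiset_lcm_iff {s : Multiset ℕ} {m : ℕ} :
    Nat.Coprime s.lcm m ↔ ∀ k ∈ s, Nat.Coprime k m := by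
  induction s using Multiset.induction_on with
  | empty => simp
  | cons a s ih => rw [Multiset.lcm_cons, coprime_lcm_left_iff, ih, Multiset.forall_mem_cons]

theorem coprime_orderOf_iff_forall_mem_parts {α : Type*} [Fintype α] [DecidableEq α] (g : Perm α)
    (m : ℕ) : Nat.Coprime (orderOf g) m ↔ ∀ k ∈ g.partition.parts, Nat.Coprime k m := by
  rw [← Perm.lcm_cycleType, coprime_multiset_lcm_iff, Perm.parts_partition]
  simp +contextual [or_imp, Multiset.mem_replicate]

theorem prod_map_ite_one_zero {ι M : Type*} [CommMonoidWithZero M] (p : ι → Prop) [DecidablePred p]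
    (s : Multiset ι) :
    (s.map fun i => if p i then (1 : M) else 0).prod = if ∀ i ∈ s, p i then 1 else 0 := by
  induction s using Multiset.induction_on with
  | empty => simp
  | cons a s ih =>
    simp only [Multiset.map_cons, Multiset.prod_cons, ih, Multiset.forall_mem_cons, ite_and,
      ite_mul, one_mul, zero_mul]

theorem rho_eq_cycleIndex (n m : ℕ) :
    rho n m = cycleIndex (fun k => if k.Coprime m then 1 else 0) n := by
  simp only [rho, cycleIndex, prod_map_ite_one_zero, ← coprime_orderOf_iff_forall_mem_parts,
    sum_boole]

theorem stmt_3 (m : ℕ) (hm : 0 < m) :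
    ∀ n : ℕ, m ≤ n →
      (n : ℝ) * rho n m =
        ((n - m : ℕ) : ℝ) * rho (n - m) m +
          ∑ k ∈ (Finset.Icc 1 m).filter (fun k => Nat.Coprime k m), rho (n - k) m := by
  intro n hmn
  have hperiodic : Function.Periodic (fun k => if k.Coprime m then (1 : ℝ) else 0) m := fun k => by
    simp only [Nat.coprime_add_self_left]
  simp only [rho_eq_cycleIndex, mul_cycleIndex_of_periodic hperiodic hmn, sum_filter, ite_mul,
    one_mul, zero_mul]
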